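/- arXiv:2101.06183 — 2 statements merged into one kernel-verified Lean document; each statement's English description precedes it below -/
import Mathlib

section
/- Under Conditions (B1), (B2) and (B3), for every u > 0 one has lim_{t→∞} R_n(u,t) = 0. -/
open Filter Topology

/-- Series function `D_j(x) = ∑_{k≥0} d_{k,j} x^k`. -/
noncomputable def Dser (d : ℕ → ℕ → ℝ) (j : ℕ) (x : ℝ) : ℝ := ∑' k : ℕ, d k j * x ^ k

/-- Normalizing constant `∑_{j≥0} d_{j,j} (δ_j(t))^j / D_j(δ_j(t))`. -/
noncomputable def Znorm (d : ℕ → ℕ → ℝ) (δf : ℕ → ℝ → ℝ) (t : ℝ) : ℝ :=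
  ∑' j : ℕ, d j j * (δf j t) ^ j / Dser d j (δf j t)

/-- `P(N(t)=k)`. -/
noncomputable def pmfN (d : ℕ → ℕ → ℝ) (δf : ℕ → ℝ → ℝ) (t : ℝ) (k : ℕ) : ℝ :=
  (d k k * (δf k t) ^ k / Dser d k (δf k t)) / Znorm d δf t

/-- `E[N(t)]`. -/
noncomputable def meanN (d : ℕ → ℕ → ℝ) (δf : ℕ → ℝ → ℝ) (t : ℝ) : ℝ :=
  ∑' k : ℕ, (k : ℝ) * pmfN d δf t k

/-- `Λ(θ) = Δ(e^θ) - Δ(1)`. -/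
noncomputable def Lam (Δ : ℝ → ℝ) (θ : ℝ) : ℝ := Δ (Real.exp θ) - Δ 1

/-- The remainder `R_n(u,t)` (an empty sum when `n = 0`). -/
noncomputable def Rfun (n : ℕ) (d : ℕ → ℕ → ℝ) (δf : ℕ → ℝ → ℝ) (u t : ℝ) : ℝ :=
  ∑ k ∈ Finset.range n, (d k k * (u * δf k t) ^ k / Dser d k (δf k t)
    - d k n * (u * δf n t) ^ k / Dser d n (δf n t))

/-- Conditions (B1), (B2), (B3), together with the standing assumptions on the model:
nonnegative coefficients, convergent and positive series functions, positive and divergent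
functions `δ_j`. For `j ≥ n` one has `d_{k,j} = d_{k,n} =: d_k` and `δ_j = δ_n =: δ`. -/
structure PSCond (n : ℕ) (d : ℕ → ℕ → ℝ) (δf : ℕ → ℝ → ℝ) (v Δ : ℝ → ℝ) : Prop where
  d_nonneg : ∀ k j : ℕ, 0 ≤ d k j
  D_summable : ∀ j : ℕ, ∀ x : ℝ, 0 < x → Summable (fun k : ℕ => d k j * x ^ k)
  D_pos : ∀ j : ℕ, ∀ x : ℝ, 0 < x → 0 < Dser d j x
  delta_pos : ∀ j : ℕ, ∀ t : ℝ, 0 < t → 0 < δf j t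
  delta_tendsto : ∀ j : ℕ, Tendsto (δf j) atTop atTop
  B1_d : ∀ j : ℕ, n ≤ j → ∀ k : ℕ, d k j = d k n
  B1_delta : ∀ j : ℕ, n ≤ j → δf j = δf n
  v_pos : ∀ t : ℝ, 0 < t → 0 < v t
  v_tendsto : Tendsto v atTop atTop
  Delta_diff : ∀ u : ℝ, 0 < u → DifferentiableAt ℝ Δ u
  B1_lim : ∀ u : ℝ, 0 < u →
    Tendsto (fun t : ℝ => (v t)⁻¹ * Real.log (Dser d n (u * t))) atTop (𝓝 (Δ u))
  B2 : ∀ m : ℕ, ∃ k : ℕ, m ≤ k ∧ 0 < d k k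
  B3_lim : ∀ k : ℕ, k < n → 0 < d k n →
    Tendsto (fun t : ℝ => (d k k * (δf k t) ^ k / Dser d k (δf k t)) /
      (d k n * (δf n t) ^ k / Dser d n (δf n t))) atTop (𝓝 0)
  B3_zero : ∀ k : ℕ, k < n → d k n = 0 → d k k = 0

/-!
If `a m > 0` for some `m > k`, then `∑ i, a i * x ^ i` dominates `x ^ m`, so in the power series
distribution with coefficients `a` the mass at `k` vanishes as `x → ∞`. Hence the masses at
`k < n` of the common distribution vanish, and (B3) bounds the masses of the `n` exceptional
distributions by them, so each of the finitely many terms of `R_n(u, t)` tends to `0`.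
-/

section PowerSeriesMass

open Asymptotics

/-- The mass at `k` of the power series distribution with coefficients `a` and parameter `x`,
used to read `R_n` as a combination of differences of masses. It is `0` by the conventions for
`tsum` and division where the series diverges or vanishes. -/
noncomputable def powerSeriesMass (a : ℕ → ℝ) (x : ℝ) (k : ℕ) : ℝ :=
  a k * x ^ k / ∑' i, a i * x ^ i

variable {a : ℕ → ℝ} {k m : ℕ}

theorem powerSeriesMass_of_eq_zero (hk : a k = 0) (x : ℝ) : powerSeriesMass a x k = 0 := by
  simp [powerSeriesMass, hk]

theorem powerSeriesMass_pos {x : ℝ} (hk : 0 < a k) (hx : 0 < x) (hsum : 0 < ∑' i, a i * x ^ i) :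
    0 < powerSeriesMass a x k :=
  div_pos (mul_pos hk (pow_pos hx k)) hsum

theorem isBigO_pow_tsum_mul_pow_atTop (ha : ∀ i, 0 ≤ a i)
    (hsum : ∀ x, 0 < x → Summable fun i ↦ a i * x ^ i) (hm : 0 < a m) :
    (fun x : ℝ ↦ x ^ m) =O[atTop] fun x ↦ ∑' i, a i * x ^ i := by
  refine .of_bound (a m)⁻¹ ?_
  filter_upwards [eventually_gt_atTop 0] with x hx
  have term_nonneg (i : ℕ) : 0 ≤ a i * x ^ i := mul_nonneg (ha i) (pow_nonneg hx.le i)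
  have term_le : a m * x ^ m ≤ ∑' i, a i * x ^ i :=
    (hsum x hx).le_tsum m fun i _ ↦ term_nonneg i
  rwa [Real.norm_of_nonneg (pow_nonneg hx.le m), Real.norm_of_nonneg (tsum_nonneg term_nonneg),
    le_inv_mul_iff₀ hm]

theorem tendsto_powerSeriesMass_atTop_zero (ha : ∀ i, 0 ≤ a i)
    (hsum : ∀ x, 0 < x → Summable fun i ↦ a i * x ^ i) (hkm : k < m) (hm : 0 < a m) :
    Tendsto (fun x ↦ powerSeriesMass a x k) atTop (𝓝 0) :=
  (((isLittleO_pow_pow_atTop_of_lt hkm).const_mul_left (a k)).trans_isBigO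
    (isBigO_pow_tsum_mul_pow_atTop ha hsum hm)).tendsto_div_nhds_zero

end PowerSeriesMass

theorem Rfun_eq_sum_powerSeriesMass (n : ℕ) (d : ℕ → ℕ → ℝ) (δf : ℕ → ℝ → ℝ) (u t : ℝ) :
    Rfun n d δf u t = ∑ k ∈ Finset.range n,
      u ^ k * (powerSeriesMass (d · k) (δf k t) k - powerSeriesMass (d · n) (δf n t) k) := by
  refine Finset.sum_congr rfl fun k _ ↦ ?_
  simp only [powerSeriesMass, Dser, mul_pow]
  ring

theorem PSCond.exists_coeff_pos {n : ℕ} {d : ℕ → ℕ → ℝ} {δf : ℕ → ℝ → ℝ} {v Δ : ℝ → ℝ}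
    (hcond : PSCond n d δf v Δ) : ∃ m, n ≤ m ∧ 0 < d m n := by
  obtain ⟨m, hnm, hm⟩ := hcond.B2 n
  exact ⟨m, hnm, hcond.B1_d m hnm m ▸ hm⟩

theorem Rn_limit_general {n : ℕ} {d : ℕ → ℕ → ℝ} {δf : ℕ → ℝ → ℝ}
    (d_nonneg : ∀ k, 0 ≤ d k n)
    (D_summable : ∀ j ≤ n, ∀ x, 0 < x → Summable fun k ↦ d k j * x ^ k)
    (D_pos : ∀ j ≤ n, ∀ x, 0 < x → 0 < Dser d j x)
    (delta_pos : ∀ j ≤ n, ∀ t, 0 < t → 0 < δf j t)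
    (delta_tendsto : Tendsto (δf n) atTop atTop)
    (exists_coeff_pos : ∃ m, n ≤ m ∧ 0 < d m n)
    (ratio_bounded : ∀ k < n, 0 < d k n → IsBoundedUnder (· ≤ ·) atTop fun t ↦
      ‖powerSeriesMass (d · k) (δf k t) k / powerSeriesMass (d · n) (δf n t) k‖)
    (coeff_zero : ∀ k < n, d k n = 0 → d k k = 0) (u : ℝ) :
    Tendsto (fun t ↦ Rfun n d δf u t) atTop (𝓝 0) := by
  obtain ⟨m, hnm, hm⟩ := exists_coeff_pos
  have common_mass_tendsto {k : ℕ} (hk : k < n) :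
      Tendsto (fun t ↦ powerSeriesMass (d · n) (δf n t) k) atTop (𝓝 0) :=
    (tendsto_powerSeriesMass_atTop_zero d_nonneg (D_summable n le_rfl)
      (hk.trans_le hnm) hm).comp delta_tendsto
  have mass_isBigO {k : ℕ} (hk : k < n) :
      (fun t ↦ powerSeriesMass (d · k) (δf k t) k) =O[atTop]
        fun t ↦ powerSeriesMass (d · n) (δf n t) k := by
    rcases (d_nonneg k).eq_or_lt with h0 | hpos
    · simpa only [powerSeriesMass_of_eq_zero (a := (d · k)) (coeff_zero k hk h0.symm)]
        using Asymptotics.isBigO_zero _ _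
    · refine (Asymptotics.isBigO_iff_div_isBoundedUnder ?_).2 (ratio_bounded k hk hpos)
      filter_upwards [eventually_gt_atTop 0] with t ht
      have x_pos := delta_pos n le_rfl t ht
      have mass_pos := powerSeriesMass_pos (a := (d · n)) hpos x_pos (D_pos n le_rfl _ x_pos)
      exact fun mass_zero ↦ absurd mass_zero mass_pos.ne'
  have term_tendsto (k : ℕ) (hk : k ∈ Finset.range n) :
      Tendsto (fun t ↦ u ^ k *
        (powerSeriesMass (d · k) (δf k t) k - powerSeriesMass (d · n) (δf n t) k)) atTop (𝓝 0) := by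
    have hkn := Finset.mem_range.1 hk
    have mass_tendsto := (mass_isBigO hkn).trans_tendsto (common_mass_tendsto hkn)
    simpa only [sub_zero, mul_zero] using
      (mass_tendsto.sub (common_mass_tendsto hkn)).const_mul (u ^ k)
  simpa [Rfun_eq_sum_powerSeriesMass] using tendsto_finsetSum _ term_tendsto

/-- Eq. (2.4) in the paper (Remark 3.1): under Conditions (B1), (B2), (B3), for all `u > 0`,
`R_n(u,t) → 0` as `t → ∞`. -/
theorem Rn_limit
    (n : ℕ) (d : ℕ → ℕ → ℝ) (δf : ℕ → ℝ → ℝ) (v Δ : ℝ → ℝ)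
    (hcond : PSCond n d δf v Δ) :
    ∀ u : ℝ, 0 < u → Tendsto (fun t : ℝ => Rfun n d δf u t) atTop (𝓝 0) := by
  intro u _
  exact Rn_limit_general (hcond.d_nonneg · n) (fun j _ ↦ hcond.D_summable j)
    (fun j _ ↦ hcond.D_pos j) (fun j _ ↦ hcond.delta_pos j) (hcond.delta_tendsto n)
    hcond.exists_coeff_pos (fun k hk hpos ↦ (hcond.B3_lim k hk hpos).norm.isBoundedUnder_le)
    hcond.B3_zero u
end

section
/- Assume Conditions (B1), (B2), (B3), that Δ is twice differentiable at 1 (so Λ''(0) exists), and the boundedness hypotheses (i), (ii), (iii). Then for every family of positive numbers {a(t) : t > 0} with a(t) → 0 and v(δ(t))·a(t) → ∞ as t → ∞, and every θ ∈ ℝ, one has lim_{t→∞} a(t) log E[ exp( θ (N(t) − E[N(t)]) / √(v(δ(t)) a(t)) ) ] = θ² Λ''(0) / 2. -/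
open Filter Topology

/-!
Let `G(u,t) = ∑ₖ uᵏ d_{k,k} δ_k(t)ᵏ / D_k(δ_k(t))`, so that `E[u^N(t)] = G(u,t) / G(1,t)`. The terms
of `G` with `k ≥ n` are those of the power series generating function `D(uδ(t)) / D(δ(t))`; by (B3)
the remaining ones are dominated by theirs, and by (B2) those are of lower order than `D`. Hence
`½ D(uδ) / D(δ) ≤ G ≤ D(uδ) / D(δ)` eventually, and `log E[u^N]` stays within `log 2` of
`log (D(uδ) / D(δ))`, which by (i) is `v(δ) (Δ(u) - Δ(1)) + O(1)`. By (ii) and (iii), `E[N(t)]` is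
`v(δ) Λ'(0) + O(√v(δ))`. With `u = exp (θ / √(v(δ) a))` both errors vanish after multiplication
by `a`, and what is left is the second-order Taylor expansion of `Λ` at `0`.
-/

open Asymptotics

section Taylor

variable {E : Type*} [NormedAddCommGroup E] [NormedSpace ℝ E]

theorem isLittleO_sub_taylor_two {f : ℝ → E} {x₀ : ℝ}
    (hf : ∀ᶠ x in 𝓝 x₀, DifferentiableAt ℝ f x) (hf' : DifferentiableAt ℝ (deriv f) x₀) :
    (fun x => f x - f x₀ - (x - x₀) • deriv f x₀ - ((x - x₀) ^ 2 / 2) • deriv (deriv f) x₀)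
      =o[𝓝 x₀] fun x => (x - x₀) ^ 2 := by
  obtain ⟨r, hr, hdiff⟩ := Metric.eventually_nhds_iff_ball.1 hf
  set R : ℝ → E := fun x =>
    f x - (x - x₀) • deriv f x₀ - ((x - x₀) ^ 2 / 2) • deriv (deriv f) x₀ with hR
  have hderiv : ∀ x ∈ Metric.ball x₀ r, HasDerivWithinAt R
      (deriv f x - deriv f x₀ - (x - x₀) • deriv (deriv f) x₀) (Metric.ball x₀ r) x := by
    intro x hx
    have hlin : HasDerivAt (fun x => x - x₀) 1 x := (hasDerivAt_id x).sub_const x₀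
    have hsq : HasDerivAt (fun x => (x - x₀) ^ 2 / 2) (x - x₀) x := by
      convert! (hlin.fun_pow 2).div_const 2 using 1
      simp
    have h := ((hdiff x hx).hasDerivAt.sub (hlin.smul_const (deriv f x₀))).sub
      (hsq.smul_const (deriv (deriv f) x₀))
    rw [one_smul] at h
    exact h.hasDerivWithinAt
  have hsmall : (fun x => deriv f x - deriv f x₀ - (x - x₀) • deriv (deriv f) x₀)
      =o[𝓝[Metric.ball x₀ r] x₀] fun x => (x - x₀) ^ 1 := by
    simpa only [pow_one] using
      (hasDerivAt_iff_isLittleO.1 hf'.hasDerivAt).mono nhdsWithin_le_nhds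
  have h := (convex_ball x₀ r).isLittleO_pow_succ_real (Metric.mem_ball_self hr) hderiv hsmall
  rw [Metric.isOpen_ball.nhdsWithin_eq (Metric.mem_ball_self hr)] at h
  refine h.congr_left fun x => ?_
  simp only [hR, sub_self, zero_smul, sub_zero, ne_eq, OfNat.ofNat_ne_zero, not_false_eq_true,
    zero_pow, zero_div]
  abel

theorem tendsto_sq_smul_sub_taylor_one {α : Type*} {l : Filter α} {f : ℝ → E} {x₀ : ℝ}
    (hf : ∀ᶠ x in 𝓝 x₀, DifferentiableAt ℝ f x) (hf' : DifferentiableAt ℝ (deriv f) x₀)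
    {s : α → ℝ} (hs : Tendsto s l atTop) (θ : ℝ) :
    Tendsto (fun t => s t ^ 2 • (f (x₀ + θ / s t) - f x₀ - (θ / s t) • deriv f x₀)) l
      (𝓝 ((θ ^ 2 / 2) • deriv (deriv f) x₀)) := by
  have hx : Tendsto (fun t => x₀ + θ / s t) l (𝓝 x₀) := by
    simpa using (hs.const_div_atTop θ).const_add x₀
  have hsq : ∀ᶠ t in l, s t ^ 2 * (θ / s t) ^ 2 = θ ^ 2 := by
    filter_upwards [hs.eventually_ne_atTop 0] with t ht
    field_simp
  have hrem : (fun t => s t ^ 2 • (f (x₀ + θ / s t) - f x₀ - (θ / s t) • deriv f x₀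
      - ((θ / s t) ^ 2 / 2) • deriv (deriv f) x₀)) =o[l] fun _ => θ ^ 2 := by
    have h := (isLittleO_sub_taylor_two hf hf').comp_tendsto hx
    simp only [Function.comp_def, add_sub_cancel_left] at h
    exact ((isBigO_refl (fun t => s t ^ 2) l).smul_isLittleO h).congr' EventuallyEq.rfl hsq
  have hlim := (isLittleO_one_iff ℝ).1
    (hrem.trans_isBigO (isBigO_const_const (θ ^ 2) (one_ne_zero (α := ℝ)) l))
  rw [← zero_add ((θ ^ 2 / 2) • _)]
  refine (hlim.add_const _).congr' ?_
  filter_upwards [hsq] with t ht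
  rw [smul_sub _ _ (_ • deriv (deriv f) x₀), smul_smul, ← mul_div_assoc, ht, sub_add_cancel]

end Taylor

theorem abs_log_sub_log_le {x y c : ℝ} (hy : 0 < y) (hc : 0 < c) (hlow : y / c ≤ x)
    (hup : x ≤ c * y) : |Real.log x - Real.log y| ≤ Real.log c := by
  have hx : 0 < x := (div_pos hy hc).trans_le hlow
  have hlow' := Real.log_le_log (div_pos hy hc) hlow
  have hup' := Real.log_le_log hx hup
  rw [Real.log_div hy.ne' hc.ne'] at hlow'
  rw [Real.log_mul hc.ne' hy.ne'] at hup'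
  exact abs_sub_le_iff.2 ⟨by linarith, by linarith⟩

theorem isLittleO_sum_range_mul_pow_tsum {c : ℕ → ℝ} (hc : ∀ k, 0 ≤ c k)
    (hsum : ∀ᶠ x : ℝ in atTop, Summable fun k => c k * x ^ k) {n m : ℕ} (hnm : n ≤ m)
    (hm : 0 < c m) :
    (fun x : ℝ => ∑ k ∈ Finset.range n, c k * x ^ k) =o[atTop] fun x => ∑' k, c k * x ^ k := by
  have hhead : (fun x : ℝ => ∑ k ∈ Finset.range n, c k * x ^ k) =o[atTop] fun x => x ^ m :=
    IsLittleO.fun_sum fun k hk => (isLittleO_pow_pow_atTop_of_lt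
      ((Finset.mem_range.1 hk).trans_le hnm)).const_mul_left (c k)
  refine hhead.trans_isBigO (IsBigO.of_bound (c m)⁻¹ ?_)
  filter_upwards [hsum, eventually_ge_atTop 0] with x hx hx0
  have hterm : ∀ k, 0 ≤ c k * x ^ k := fun k => mul_nonneg (hc k) (pow_nonneg hx0 k)
  rw [Real.norm_of_nonneg (pow_nonneg hx0 m), Real.norm_of_nonneg (tsum_nonneg hterm),
    le_inv_mul_iff₀ hm]
  exact hx.le_tsum m fun k _ => hterm k

theorem tsum_mem_Icc_of_le_of_tail_eq {f g : ℕ → ℝ} {n : ℕ} (hf : ∀ k, 0 ≤ f k)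
    (hfg : ∀ k, f k ≤ g k) (htail : ∀ k, n ≤ k → f k = g k) (hg : Summable g) :
    ∑' k, f k ∈ Set.Icc (∑' k, g k - ∑ k ∈ Finset.range n, g k) (∑' k, g k) := by
  have hfsum : Summable f := Summable.of_nonneg_of_le hf hfg hg
  refine ⟨?_, hfsum.tsum_le_tsum hfg hg⟩
  have htails : ∑' k, f (k + n) = ∑' k, g (k + n) :=
    tsum_congr fun k => htail _ (Nat.le_add_left n k)
  have hhead : 0 ≤ ∑ k ∈ Finset.range n, f k := Finset.sum_nonneg fun k _ => hf k
  linarith [hfsum.sum_add_tsum_nat_add n, hg.sum_add_tsum_nat_add n]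

theorem isBigO_one_of_exists_abs_le {α : Type*} [Preorder α] [IsDirectedOrder α] [NoMaxOrder α]
    {g : α → ℝ} {b : α} (h : ∃ M : ℝ, ∀ t, b < t → |g t| ≤ M) : g =O[atTop] fun _ => (1 : ℝ) := by
  obtain ⟨M, hM⟩ := h
  refine IsBigO.of_bound M ((eventually_gt_atTop b).mono fun t ht => ?_)
  simpa using hM t ht

section ModerateDeviations

variable {α : Type*} {l : Filter α}

theorem isBigO_mul_sub_sqrt {V g m : α → ℝ} {c : ℝ} (hV : ∀ᶠ t in l, 0 < V t)
    (hg : (fun t => √(V t) * (c - g t / V t)) =O[l] fun _ => (1 : ℝ))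
    (hm : (fun t => (√(V t))⁻¹ * (g t - m t)) =O[l] fun _ => (1 : ℝ)) :
    (fun t => V t * c - m t) =O[l] fun t => √(V t) := by
  have h := (isBigO_refl (fun t => √(V t)) l).mul (hg.add hm)
  simp only [mul_one] at h
  refine h.congr' ?_ EventuallyEq.rfl
  filter_upwards [hV] with t ht
  have hsqrt : √(V t) ≠ 0 := (Real.sqrt_pos.2 ht).ne'
  rw [mul_add, ← mul_assoc, Real.mul_self_sqrt ht.le, mul_inv_cancel_left₀ hsqrt]
  field_simp
  ring

/-- Here `K` plays the role of the logarithm of a moment generating function at `θ / √(V a)`, and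
`m` that of the mean. -/
theorem tendsto_mul_sub_mul_div_sqrt {f : ℝ → ℝ} (hf : ∀ᶠ x in 𝓝 0, DifferentiableAt ℝ f x)
    (hf' : DifferentiableAt ℝ (deriv f) 0) {V a K m : α → ℝ} {θ : ℝ}
    (ha_pos : ∀ᶠ t in l, 0 < a t) (ha : Tendsto a l (𝓝 0))
    (hVa : Tendsto (fun t => V t * a t) l atTop)
    (hK : (fun t => K t - V t * (f (θ / √(V t * a t)) - f 0)) =O[l] fun _ => (1 : ℝ))
    (hm : (fun t => V t * deriv f 0 - m t) =O[l] fun t => √(V t)) :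
    Tendsto (fun t => a t * (K t - θ * m t / √(V t * a t))) l
      (𝓝 (θ ^ 2 * deriv (deriv f) 0 / 2)) := by
  set s : α → ℝ := fun t => √(V t * a t) with hs
  have hs_top : Tendsto s l atTop := Real.tendsto_sqrt_atTop.comp hVa
  have htaylor : Tendsto (fun t => s t ^ 2 * (f (θ / s t) - f 0 - θ / s t * deriv f 0)) l
      (𝓝 (θ ^ 2 * deriv (deriv f) 0 / 2)) := by
    simpa only [zero_add, smul_eq_mul, div_mul_eq_mul_div]
      using tendsto_sq_smul_sub_taylor_one hf hf' hs_top θ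
  have hKerr : Tendsto (fun t => a t * (K t - V t * (f (θ / s t) - f 0))) l (𝓝 0) :=
    ((isBigO_refl a l).mul hK).trans_tendsto (by simpa using ha)
  have hmerr : Tendsto (fun t => θ * (a t / s t) * (V t * deriv f 0 - m t)) l (𝓝 0) := by
    refine (((isBigO_refl (fun t => a t / s t) l).const_mul_left θ).mul hm).trans_tendsto ?_
    have hsqrt : Tendsto (fun t => √(a t)) l (𝓝 0) := by simpa using ha.sqrt
    refine hsqrt.congr' ?_
    filter_upwards [ha_pos, hVa.eventually_gt_atTop 0] with t hat hVat
    have hVt : 0 < V t := pos_of_mul_pos_left hVat hat.le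
    have hVsqrt : √(V t) ≠ 0 := (Real.sqrt_pos.2 hVt).ne'
    simp only [hs]
    rw [Real.sqrt_mul hVt.le, div_mul_eq_mul_div, mul_comm (√(V t)), mul_div_mul_right _ _ hVsqrt,
      Real.div_sqrt]
  have hsum := (hKerr.add htaylor).add hmerr
  rw [zero_add, add_zero] at hsum
  refine hsum.congr' ?_
  filter_upwards [hVa.eventually_gt_atTop 0] with t hVat
  have hsq : s t ^ 2 = V t * a t := Real.sq_sqrt hVat.le
  rw [hsq]
  ring

end ModerateDeviations

section Lam

variable {Δ : ℝ → ℝ} {θ : ℝ}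

theorem hasDerivAt_Lam (h : DifferentiableAt ℝ Δ (Real.exp θ)) :
    HasDerivAt (Lam Δ) (deriv Δ (Real.exp θ) * Real.exp θ) θ :=
  (h.hasDerivAt.comp θ (Real.hasDerivAt_exp θ)).sub_const (Δ 1)

theorem differentiableAt_deriv_Lam (h : ∀ᶠ u in 𝓝 (Real.exp θ), DifferentiableAt ℝ Δ u)
    (h' : DifferentiableAt ℝ (deriv Δ) (Real.exp θ)) : DifferentiableAt ℝ (deriv (Lam Δ)) θ := by
  have hderiv : deriv (Lam Δ) =ᶠ[𝓝 θ] fun x => deriv Δ (Real.exp x) * Real.exp x := by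
    filter_upwards [Real.continuous_exp.continuousAt.eventually h] with x hx
    exact (hasDerivAt_Lam hx).deriv
  rw [hderiv.differentiableAt_iff]
  exact (h'.comp θ Real.differentiableAt_exp).mul Real.differentiableAt_exp

end Lam

/-- The probability `d_{k,j} xᵏ / D_j(x)` of `k` under the power series distribution with
coefficients `d_{·,j}` and parameter `x`. The law of `N(t)` is proportional to its diagonal
`j = k`, `x = δ_k(t)`. -/
noncomputable def powerSeriesProb (d : ℕ → ℕ → ℝ) (j : ℕ) (x : ℝ) (k : ℕ) : ℝ :=
  d k j * x ^ k / Dser d j x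

/-- The generating function `G(u,t) = ∑ₖ uᵏ d_{k,k} δ_k(t)ᵏ / D_k(δ_k(t))` of the unnormalized law
of `N(t)`. -/
noncomputable def diagGenFun (d : ℕ → ℕ → ℝ) (δf : ℕ → ℝ → ℝ) (t u : ℝ) : ℝ :=
  ∑' k : ℕ, u ^ k * powerSeriesProb d k (δf k t) k

/-- The probability generating function `E[u^N(t)]`. -/
noncomputable def pgfN (d : ℕ → ℕ → ℝ) (δf : ℕ → ℝ → ℝ) (t u : ℝ) : ℝ :=
  ∑' k : ℕ, u ^ k * pmfN d δf t k

section GeneratingFunctions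

variable {d : ℕ → ℕ → ℝ} {δf : ℕ → ℝ → ℝ}

theorem hasSum_pow_mul_powerSeriesProb {j : ℕ} {u x : ℝ}
    (h : Summable fun k => d k j * (u * x) ^ k) :
    HasSum (fun k => u ^ k * powerSeriesProb d j x k) (Dser d j (u * x) / Dser d j x) := by
  refine (h.hasSum.div_const (Dser d j x)).congr_fun fun k => ?_
  rw [powerSeriesProb, mul_pow]
  ring

theorem diagGenFun_one (t : ℝ) : diagGenFun d δf t 1 = Znorm d δf t := by
  simp only [diagGenFun, Znorm, powerSeriesProb, one_pow, one_mul]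

theorem pgfN_eq_div (t u : ℝ) : pgfN d δf t u = diagGenFun d δf t u / Znorm d δf t := by
  simp only [pgfN, diagGenFun, pmfN, powerSeriesProb, ← tsum_div_const, mul_div_assoc]

theorem tsum_exp_mul_pmfN (t θ m s : ℝ) :
    ∑' k : ℕ, Real.exp (θ * (((k : ℝ) - m) / s)) * pmfN d δf t k =
      Real.exp (-(θ * m / s)) * pgfN d δf t (Real.exp (θ / s)) := by
  rw [pgfN, ← tsum_mul_left]
  refine tsum_congr fun k => ?_
  rw [← mul_assoc, ← Real.exp_nat_mul, ← Real.exp_add]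
  ring_nf

end GeneratingFunctions

namespace PSCond

variable {n : ℕ} {d : ℕ → ℕ → ℝ} {δf : ℕ → ℝ → ℝ} {v Δ : ℝ → ℝ}

theorem powerSeriesProb_nonneg (h : PSCond n d δf v Δ) (j k : ℕ) {x : ℝ} (hx : 0 < x) :
    0 ≤ powerSeriesProb d j x k :=
  div_nonneg (mul_nonneg (h.d_nonneg k j) (pow_nonneg hx.le k)) (h.D_pos j x hx).le

theorem powerSeriesProb_diag_eq (h : PSCond n d δf v Δ) {k : ℕ} (hk : n ≤ k) (t : ℝ) :
    powerSeriesProb d k (δf k t) k = powerSeriesProb d n (δf n t) k := by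
  simp only [powerSeriesProb, Dser, h.B1_d k hk, h.B1_delta k hk]

theorem eventually_powerSeriesProb_diag_le (h : PSCond n d δf v Δ) :
    ∀ᶠ t in atTop, ∀ k, powerSeriesProb d k (δf k t) k ≤ powerSeriesProb d n (δf n t) k := by
  have hhead : ∀ k ∈ Finset.range n, ∀ᶠ t in atTop,
      powerSeriesProb d k (δf k t) k ≤ powerSeriesProb d n (δf n t) k := by
    intro k hk
    have hkn := Finset.mem_range.1 hk
    rcases (h.d_nonneg k n).eq_or_lt with hzero | hpos
    · simp [powerSeriesProb, ← hzero, h.B3_zero k hkn hzero.symm]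
    · filter_upwards [(h.B3_lim k hkn hpos).eventually_lt_const one_pos, eventually_gt_atTop 0]
        with t hratio ht
      have hδ := h.delta_pos n t ht
      exact ((div_lt_one (div_pos (mul_pos hpos (pow_pos hδ k)) (h.D_pos n _ hδ))).1 hratio).le
  filter_upwards [(Filter.eventually_all_finset _).2 hhead] with t ht k
  rcases lt_or_ge k n with hk | hk
  · exact ht k (Finset.mem_range.2 hk)
  · exact (h.powerSeriesProb_diag_eq hk t).le

theorem eventually_sum_range_le_half_Dser (h : PSCond n d δf v Δ) :
    ∀ᶠ x : ℝ in atTop, ∑ k ∈ Finset.range n, d k n * x ^ k ≤ Dser d n x / 2 := by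
  obtain ⟨m, hnm, hm⟩ := h.B2 n
  rw [h.B1_d m hnm] at hm
  have hlittle := isLittleO_sum_range_mul_pow_tsum (fun k => h.d_nonneg k n)
    ((eventually_gt_atTop 0).mono (h.D_summable n)) hnm hm
  filter_upwards [hlittle.bound one_half_pos, eventually_gt_atTop 0] with x hx hx0
  calc ∑ k ∈ Finset.range n, d k n * x ^ k
      ≤ 1 / 2 * ‖Dser d n x‖ := (le_abs_self _).trans hx
    _ = Dser d n x / 2 := by rw [Real.norm_of_nonneg (h.D_pos n x hx0).le]; ring

theorem eventually_Dser_div_pos (h : PSCond n d δf v Δ) {u : ℝ → ℝ} {u₀ : ℝ}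
    (hu₀ : 0 < u₀) (hu : Tendsto u atTop (𝓝 u₀)) :
    ∀ᶠ t in atTop, 0 < Dser d n (u t * δf n t) / Dser d n (δf n t) := by
  filter_upwards [hu.eventually_const_lt hu₀, eventually_gt_atTop 0] with t hut ht
  have hδ := h.delta_pos n t ht
  exact div_pos (h.D_pos n _ (mul_pos hut hδ)) (h.D_pos n _ hδ)

theorem eventually_diagGenFun_mem_Icc (h : PSCond n d δf v Δ) {u : ℝ → ℝ} {u₀ : ℝ}
    (hu₀ : 0 < u₀) (hu : Tendsto u atTop (𝓝 u₀)) :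
    ∀ᶠ t in atTop, diagGenFun d δf t (u t) ∈ Set.Icc
      (Dser d n (u t * δf n t) / Dser d n (δf n t) / 2)
      (Dser d n (u t * δf n t) / Dser d n (δf n t)) := by
  filter_upwards [h.eventually_powerSeriesProb_diag_le,
    (hu.pos_mul_atTop hu₀ (h.delta_tendsto n)).eventually h.eventually_sum_range_le_half_Dser,
    hu.eventually_const_lt hu₀, eventually_gt_atTop 0] with t hle hhead hut ht
  have hδ := h.delta_pos n t ht
  have hsum := hasSum_pow_mul_powerSeriesProb (h.D_summable n _ (mul_pos hut hδ))
  have hpow : ∀ k, 0 ≤ u t ^ k := fun k => pow_nonneg hut.le k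
  have hmem := tsum_mem_Icc_of_le_of_tail_eq (n := n)
    (fun k => mul_nonneg (hpow k) (h.powerSeriesProb_nonneg k k (h.delta_pos k t ht)))
    (fun k => mul_le_mul_of_nonneg_left (hle k) (hpow k))
    (fun k hk => congrArg (u t ^ k * ·) (h.powerSeriesProb_diag_eq hk t)) hsum.summable
  rw [hsum.tsum_eq] at hmem
  refine ⟨le_trans ?_ hmem.1, hmem.2⟩
  have hsmall : ∑ k ∈ Finset.range n, u t ^ k * powerSeriesProb d n (δf n t) k
      ≤ Dser d n (u t * δf n t) / Dser d n (δf n t) / 2 := by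
    calc ∑ k ∈ Finset.range n, u t ^ k * powerSeriesProb d n (δf n t) k
        = (∑ k ∈ Finset.range n, d k n * (u t * δf n t) ^ k) / Dser d n (δf n t) := by
          rw [Finset.sum_div]
          refine Finset.sum_congr rfl fun k _ => ?_
          rw [powerSeriesProb, mul_pow]
          ring
      _ ≤ Dser d n (u t * δf n t) / 2 / Dser d n (δf n t) :=
          div_le_div_of_nonneg_right hhead (h.D_pos n _ hδ).le
      _ = Dser d n (u t * δf n t) / Dser d n (δf n t) / 2 := div_right_comm _ _ _
  linarith

theorem eventually_Znorm_mem_Icc (h : PSCond n d δf v Δ) :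
    ∀ᶠ t in atTop, Znorm d δf t ∈ Set.Icc (1 / 2) 1 := by
  filter_upwards [h.eventually_diagGenFun_mem_Icc one_pos tendsto_const_nhds,
    eventually_gt_atTop 0] with t hmem ht
  rwa [diagGenFun_one, one_mul, div_self (h.D_pos n _ (h.delta_pos n t ht)).ne'] at hmem

theorem eventually_pgfN_mem_Icc (h : PSCond n d δf v Δ) {u : ℝ → ℝ} {u₀ : ℝ}
    (hu₀ : 0 < u₀) (hu : Tendsto u atTop (𝓝 u₀)) :
    ∀ᶠ t in atTop, pgfN d δf t (u t) ∈ Set.Icc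
      (Dser d n (u t * δf n t) / Dser d n (δf n t) / 2)
      (2 * (Dser d n (u t * δf n t) / Dser d n (δf n t))) := by
  filter_upwards [h.eventually_diagGenFun_mem_Icc hu₀ hu, h.eventually_Znorm_mem_Icc,
    h.eventually_Dser_div_pos hu₀ hu] with t hG hZ hQ
  have hZpos : 0 < Znorm d δf t := one_half_pos.trans_le hZ.1
  rw [pgfN_eq_div, Set.mem_Icc, le_div_iff₀ hZpos, div_le_iff₀ hZpos]
  constructor <;> nlinarith [hG.1, hG.2, hZ.1, hZ.2]

theorem eventually_pgfN_pos (h : PSCond n d δf v Δ) {u : ℝ → ℝ} {u₀ : ℝ}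
    (hu₀ : 0 < u₀) (hu : Tendsto u atTop (𝓝 u₀)) :
    ∀ᶠ t in atTop, 0 < pgfN d δf t (u t) := by
  filter_upwards [h.eventually_pgfN_mem_Icc hu₀ hu,
    h.eventually_Dser_div_pos hu₀ hu] with t hmem hQ
  exact (half_pos hQ).trans_le hmem.1

theorem isBigO_log_pgfN_sub (h : PSCond n d δf v Δ) {u : ℝ → ℝ} {u₀ : ℝ}
    (hu₀ : 0 < u₀) (hu : Tendsto u atTop (𝓝 u₀)) :
    (fun t => Real.log (pgfN d δf t (u t))
      - Real.log (Dser d n (u t * δf n t) / Dser d n (δf n t))) =O[atTop] fun _ => (1 : ℝ) := by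
  refine IsBigO.of_bound (Real.log 2) ?_
  filter_upwards [h.eventually_pgfN_mem_Icc hu₀ hu,
    h.eventually_Dser_div_pos hu₀ hu] with t hmem hQ
  simpa using abs_log_sub_log_le hQ two_pos hmem.1 hmem.2

theorem differentiableAt_Lam (h : PSCond n d δf v Δ) (θ : ℝ) : DifferentiableAt ℝ (Lam Δ) θ :=
  (hasDerivAt_Lam (h.Delta_diff _ (Real.exp_pos θ))).differentiableAt

theorem differentiableAt_deriv_Lam_zero (h : PSCond n d δf v Δ)
    (hΔ : DifferentiableAt ℝ (deriv Δ) 1) : DifferentiableAt ℝ (deriv (Lam Δ)) 0 :=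
  differentiableAt_deriv_Lam ((lt_mem_nhds (Real.exp_pos 0)).mono h.Delta_diff)
    (by rwa [Real.exp_zero])

theorem eventually_v_delta_pos (h : PSCond n d δf v Δ) : ∀ᶠ t in atTop, 0 < v (δf n t) :=
  (eventually_gt_atTop 0).mono fun t ht => h.v_pos _ (h.delta_pos n t ht)

end PSCond

/-- Limit (3.12) in the proof of Proposition 3.2: under Conditions (B1), (B2), (B3), twice
differentiability of `Δ` at `1` and the boundedness hypotheses on `H1`, `H2`, `H3`, for every
`a(t) > 0` with `a(t) → 0`, `v(δ(t))a(t) → ∞`, and every `θ ∈ ℝ`,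
`a(t) log E[exp(θ (N(t)-E[N(t)])/√(v(δ(t))a(t)))] → θ² Λ''(0)/2`. -/
theorem limit_log_mgf_MD
    (n : ℕ) (d : ℕ → ℕ → ℝ) (δf : ℕ → ℝ → ℝ) (v Δ : ℝ → ℝ)
    (hcond : PSCond n d δf v Δ)
    (hZsum : ∀ t : ℝ, 0 < t →
      Summable (fun j : ℕ => d j j * (δf j t) ^ j / Dser d j (δf j t)))
    (hZpos : ∀ t : ℝ, 0 < t → 0 < Znorm d δf t)
    -- `Δ` is twice differentiable at `1` (so `Λ''(0)` exists)
    (hDelta'' : DifferentiableAt ℝ (deriv Δ) 1)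
    -- hypothesis (i): `H1(t)` is bounded whenever `u(t) → 1`
    (hH1 : ∀ u : ℝ → ℝ, (∀ t : ℝ, 0 < t → 0 < u t) → Tendsto u atTop (𝓝 1) →
      ∃ M : ℝ, ∀ t : ℝ, 0 < t →
        |Real.log (Dser d n (u t * δf n t) / Dser d n (δf n t))
          - v (δf n t) * (Δ (u t) - Δ 1)| ≤ M)
    -- hypothesis (ii): `H2(t)` is bounded
    (hH2 : ∃ M : ℝ, ∀ t : ℝ, 0 < t →
      |Real.sqrt (v (δf n t)) * (deriv (Lam Δ) 0
        - δf n t * deriv (Dser d n) (δf n t) / (v (δf n t) * Dser d n (δf n t)))| ≤ M)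
    -- hypothesis (iii): `H3(t)` is bounded
    (hH3 : ∃ M : ℝ, ∀ t : ℝ, 0 < t →
      |(Real.sqrt (v (δf n t)))⁻¹ *
        (δf n t * deriv (Dser d n) (δf n t) / Dser d n (δf n t) - meanN d δf t)| ≤ M)
    (a : ℝ → ℝ) (ha_pos : ∀ t : ℝ, 0 < t → 0 < a t)
    (ha0 : Tendsto a atTop (𝓝 0))
    (hva : Tendsto (fun t : ℝ => v (δf n t) * a t) atTop atTop) :
    ∀ θ : ℝ,
      Tendsto (fun t : ℝ => a t *
          Real.log (∑' k : ℕ,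
            Real.exp (θ * (((k : ℝ) - meanN d δf t) / Real.sqrt (v (δf n t) * a t)))
              * pmfN d δf t k))
        atTop (𝓝 (θ ^ 2 * deriv (deriv (Lam Δ)) 0 / 2)) := by
  intro θ
  have hu : Tendsto (fun t => Real.exp (θ / √(v (δf n t) * a t))) atTop (𝓝 1) := by
    simpa using ((Real.tendsto_sqrt_atTop.comp hva).const_div_atTop θ).rexp
  have hK : (fun t => Real.log (pgfN d δf t (Real.exp (θ / √(v (δf n t) * a t))))
      - v (δf n t) * (Lam Δ (θ / √(v (δf n t) * a t)) - Lam Δ 0)) =O[atTop] fun _ => (1 : ℝ) :=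
    ((hcond.isBigO_log_pgfN_sub one_pos hu).add
      (isBigO_one_of_exists_abs_le (hH1 _ (fun _ _ => Real.exp_pos _) hu))).congr_left
      fun t => by simp [Lam]
  have hm : (fun t => v (δf n t) * deriv (Lam Δ) 0 - meanN d δf t)
      =O[atTop] fun t => √(v (δf n t)) :=
    isBigO_mul_sub_sqrt hcond.eventually_v_delta_pos
      (by simpa only [div_div, mul_comm (Dser d n _)] using isBigO_one_of_exists_abs_le hH2)
      (isBigO_one_of_exists_abs_le hH3)
  refine (tendsto_mul_sub_mul_div_sqrt (.of_forall hcond.differentiableAt_Lam)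
    (hcond.differentiableAt_deriv_Lam_zero hDelta'') ((eventually_gt_atTop 0).mono ha_pos)
    ha0 hva hK hm).congr' ?_
  filter_upwards [hcond.eventually_pgfN_pos one_pos hu] with t ht
  rw [tsum_exp_mul_pmfN, Real.log_mul (Real.exp_ne_zero _) ht.ne', Real.log_exp, neg_add_eq_sub]
end
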